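/- Let H be a finite-dimensional complex Hilbert space and let N be a self-adjoint linear subspace of trace-zero operators in B(H). Then there exists an entanglement breaking channel Φ on B(H), i.e. a channel of the form Φ(X) = Σ_{k=1}^m Tr(F_k X) R_k with finitely many density matrices R_k and positive semidefinite operators F_k satisfying Σ_{k=1}^m F_k = I_H, such that N = {X ∈ B(H) : Φ(X) = 0}. -/

import Mathlib

noncomputable section

open scoped ComplexInnerProductSpace
open ContinuousLinearMap Filter Topology

/-- The rank-one operator `u v*`, i.e. `x ↦ ⟪v, x⟫ • u`. -/
def rankOne {H K : Type*} [NormedAddCommGroup H] [InnerProductSpace ℂ H]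
    [NormedAddCommGroup K] [InnerProductSpace ℂ K] (u : K) (v : H) : H →L[ℂ] K :=
  (ContinuousLinearMap.toSpanSingleton ℂ u).comp (innerSL ℂ v)

/-- An operator is trace class iff the sums `∑ |⟪f i, T (e i)⟫|` over finite orthonormal
families are uniformly bounded (the supremum being the trace norm). -/
def IsTraceClass {H K : Type*} [NormedAddCommGroup H] [InnerProductSpace ℂ H]
    [NormedAddCommGroup K] [InnerProductSpace ℂ K] (T : H →L[ℂ] K) : Prop :=
  ∃ C : ℝ, ∀ (n : ℕ) (e : Fin n → H) (f : Fin n → K),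
    Orthonormal ℂ e → Orthonormal ℂ f → (∑ i, ‖⟪f i, T (e i)⟫‖) ≤ C

/-- The trace norm of an operator. -/
def traceNorm {H K : Type*} [NormedAddCommGroup H] [InnerProductSpace ℂ H]
    [NormedAddCommGroup K] [InnerProductSpace ℂ K] (T : H →L[ℂ] K) : ℝ :=
  sSup { r : ℝ | ∃ (n : ℕ) (e : Fin n → H) (f : Fin n → K),
    Orthonormal ℂ e ∧ Orthonormal ℂ f ∧ r = ∑ i, ‖⟪f i, T (e i)⟫‖ }

/-- A fixed Hilbert basis of a Hilbert space. -/
def stdONB (H : Type*) [NormedAddCommGroup H] [InnerProductSpace ℂ H] [CompleteSpace H] :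
    HilbertBasis (exists_hilbertBasis ℂ H).choose ℂ H :=
  (exists_hilbertBasis ℂ H).choose_spec.choose

/-- The trace of a (trace-class) operator. -/
def Tr {H : Type*} [NormedAddCommGroup H] [InnerProductSpace ℂ H] [CompleteSpace H]
    (T : H →L[ℂ] H) : ℂ :=
  ∑' i, ⟪stdONB H i, T (stdONB H i)⟫

/-- Convergence of a series of operators in trace norm. -/
def HasSumTN {H K : Type*} [NormedAddCommGroup H] [InnerProductSpace ℂ H]
    [NormedAddCommGroup K] [InnerProductSpace ℂ K] {ι : Type*}
    (f : ι → (H →L[ℂ] K)) (T : H →L[ℂ] K) : Prop :=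
  Filter.Tendsto (fun s : Finset ι => traceNorm (T - ∑ k ∈ s, f k)) Filter.atTop (nhds 0)

/-- A state: a positive trace-class operator with trace one. -/
def IsState {H : Type*} [NormedAddCommGroup H] [InnerProductSpace ℂ H] [CompleteSpace H]
    (ρ : H →L[ℂ] H) : Prop :=
  IsTraceClass ρ ∧ ρ.IsPositive ∧ Tr ρ = 1

/-- Positivity of a finite matrix of operators, viewed as a block operator. -/
def MatPos {H : Type*} [NormedAddCommGroup H] [InnerProductSpace ℂ H] {n : ℕ}
    (M : Fin n → Fin n → (H →L[ℂ] H)) : Prop :=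
  ∀ x : Fin n → H,
    0 ≤ (∑ i, ∑ j, ⟪x i, M i j (x j)⟫).re ∧ (∑ i, ∑ j, ⟪x i, M i j (x j)⟫).im = 0

/-- Complete positivity of a linear map on trace-class operators. -/
def IsCompletelyPositive {H K : Type*} [NormedAddCommGroup H] [InnerProductSpace ℂ H]
    [NormedAddCommGroup K] [InnerProductSpace ℂ K]
    (Φ : (H →L[ℂ] H) →ₗ[ℂ] (K →L[ℂ] K)) : Prop :=
  ∀ (n : ℕ) (M : Fin n → Fin n → (H →L[ℂ] H)),
    (∀ i j, IsTraceClass (M i j)) → MatPos M → MatPos fun i j => Φ (M i j)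

/-- A quantum channel: a completely positive trace-preserving linear map on
trace-class operators. -/
structure IsChannel {H K : Type*} [NormedAddCommGroup H] [InnerProductSpace ℂ H]
    [CompleteSpace H] [NormedAddCommGroup K] [InnerProductSpace ℂ K] [CompleteSpace K]
    (Φ : (H →L[ℂ] H) →ₗ[ℂ] (K →L[ℂ] K)) : Prop where
  maps_traceClass : ∀ X : H →L[ℂ] H, IsTraceClass X → IsTraceClass (Φ X)
  completelyPositive : IsCompletelyPositive Φ
  tracePreserving : ∀ X : H →L[ℂ] H, IsTraceClass X → Tr (Φ X) = Tr X

/-- Strongly entanglement breaking channel: admits a Holevo (measure-and-prepare) form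
`Φ(X) = ∑ₖ Tr(Fₖ X) Rₖ` with states `Rₖ` and positive `Fₖ` with `∑ₖ Fₖ = I` (SOT). -/
def IsSEB {H K : Type*} [NormedAddCommGroup H] [InnerProductSpace ℂ H] [CompleteSpace H]
    [NormedAddCommGroup K] [InnerProductSpace ℂ K] [CompleteSpace K]
    (Φ : (H →L[ℂ] H) →ₗ[ℂ] (K →L[ℂ] K)) : Prop :=
  ∃ (R : ℕ → (K →L[ℂ] K)) (F : ℕ → (H →L[ℂ] H)),
    (∀ k, IsState (R k)) ∧ (∀ k, (F k).IsPositive) ∧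
    (∀ x : H, HasSum (fun k => F k x) x) ∧
    ∀ X : H →L[ℂ] H, IsTraceClass X → HasSumTN (fun k => Tr (F k * X) • R k) (Φ X)

/-- The weak* topology on `B(H)`, induced by the pairing with trace-class operators. -/
def weakStarTopology (H : Type*) [NormedAddCommGroup H] [InnerProductSpace ℂ H]
    [CompleteSpace H] : TopologicalSpace (H →L[ℂ] H) :=
  TopologicalSpace.induced
    (fun Y => fun X : { X : H →L[ℂ] H // IsTraceClass X } => Tr ((X : H →L[ℂ] H) * Y))
    inferInstance

section Helpers

variable {H : Type*} [NormedAddCommGroup H] [InnerProductSpace ℂ H] [FiniteDimensional ℂ H]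

/-- In finite dimensions the trace is the usual linear-algebraic trace. -/
theorem Tr_eq_trace (T : H →L[ℂ] H) : Tr T = LinearMap.trace ℂ H T.toLinearMap := by
  have hfin : Finite (exists_hilbertBasis ℂ H).choose :=
    ((stdONB H).orthonormal.linearIndependent).finite
  haveI := Fintype.ofFinite (exists_hilbertBasis ℂ H).choose
  unfold Tr
  rw [tsum_fintype, LinearMap.trace_eq_sum_inner _ (stdONB H).toOrthonormalBasis]
  simp

theorem Tr_add (S T : H →L[ℂ] H) : Tr (S + T) = Tr S + Tr T := by
  simp [Tr_eq_trace]

theorem Tr_sub (S T : H →L[ℂ] H) : Tr (S - T) = Tr S - Tr T := by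
  simp [Tr_eq_trace]

theorem Tr_smul (c : ℂ) (T : H →L[ℂ] H) : Tr (c • T) = c * Tr T := by
  simp [Tr_eq_trace]

theorem Tr_zero : Tr (0 : H →L[ℂ] H) = 0 := by
  simp [Tr_eq_trace]

theorem Tr_sum {ι : Type*} (s : Finset ι) (f : ι → (H →L[ℂ] H)) :
    Tr (∑ i ∈ s, f i) = ∑ i ∈ s, Tr (f i) := by
  simp [Tr_eq_trace]

theorem Tr_mul_comm (S T : H →L[ℂ] H) : Tr (S * T) = Tr (T * S) := by
  simp only [Tr_eq_trace]
  exact LinearMap.trace_mul_comm ℂ S.toLinearMap T.toLinearMap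

theorem Tr_one : Tr (1 : H →L[ℂ] H) = Module.finrank ℂ H := by
  rw [Tr_eq_trace]
  exact LinearMap.trace_one ℂ H

theorem Tr_eq_sum {ι : Type*} [Fintype ι] (b : OrthonormalBasis ι ℂ H) (T : H →L[ℂ] H) :
    Tr T = ∑ i, ⟪b i, T (b i)⟫ := by
  rw [Tr_eq_trace, LinearMap.trace_eq_sum_inner _ b]
  rfl

theorem Tr_star (T : H →L[ℂ] H) : Tr (star T) = star (Tr T) := by
  rw [Tr_eq_sum (stdOrthonormalBasis ℂ H), Tr_eq_sum (stdOrthonormalBasis ℂ H), star_sum]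
  refine Finset.sum_congr rfl fun i _ => ?_
  rw [ContinuousLinearMap.star_eq_adjoint, ContinuousLinearMap.adjoint_inner_right]
  simp

theorem Tr_star_mul_self_eq_zero {T : H →L[ℂ] H} (h : Tr (T * star T) = 0) : T = 0 := by
  rw [Tr_mul_comm, Tr_eq_sum (stdOrthonormalBasis ℂ H)] at h
  have h2 : ∀ i, ⟪stdOrthonormalBasis ℂ H i, (star T * T) (stdOrthonormalBasis ℂ H i)⟫
      = ((‖T (stdOrthonormalBasis ℂ H i)‖ ^ 2 : ℝ) : ℂ) := by
    intro i
    rw [ContinuousLinearMap.mul_apply, ContinuousLinearMap.star_eq_adjoint,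
      ContinuousLinearMap.adjoint_inner_right, inner_self_eq_norm_sq_to_K]
    simp
  simp only [h2] at h
  rw [← Complex.ofReal_sum, Complex.ofReal_eq_zero,
    Finset.sum_eq_zero_iff_of_nonneg (fun _ _ => by positivity)] at h
  refine ContinuousLinearMap.coe_injective ?_
  refine (stdOrthonormalBasis ℂ H).toBasis.ext fun i => ?_
  simpa using h i (Finset.mem_univ i)

theorem isTraceClass_of_finite (T : H →L[ℂ] H) : IsTraceClass T := by
  refine ⟨Module.finrank ℂ H * ‖T‖, fun n e f he hf => ?_⟩
  have hn : n ≤ Module.finrank ℂ H := by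
    simpa using he.linearIndependent.fintype_card_le_finrank
  calc ∑ i, ‖⟪f i, T (e i)⟫‖ ≤ ∑ _i : Fin n, ‖T‖ := by
        refine Finset.sum_le_sum fun i _ => ?_
        calc ‖⟪f i, T (e i)⟫‖ ≤ ‖f i‖ * ‖T (e i)‖ := norm_inner_le_norm _ _
          _ ≤ 1 * (‖T‖ * ‖e i‖) := by
              rw [hf.1 i]; gcongr; exact T.le_opNorm _
          _ = ‖T‖ := by rw [he.1 i]; ring
    _ = n * ‖T‖ := by simp
    _ ≤ _ := by gcongr

/-- The trace against a fixed operator, as a linear functional. -/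
def trL (Y : H →L[ℂ] H) : (H →L[ℂ] H) →ₗ[ℂ] ℂ where
  toFun X := Tr (Y * X)
  map_add' X Z := by rw [mul_add, Tr_add]
  map_smul' c X := by rw [mul_smul_comm, Tr_smul]; rfl

/-- The trace pairing as a map into the dual. -/
def trDual : (H →L[ℂ] H) →ₗ[ℂ] Module.Dual ℂ (H →L[ℂ] H) where
  toFun Y := trL Y
  map_add' X Z := by ext W; simp [trL, add_mul, Tr_add]
  map_smul' c X := by ext W; simp [trL, Tr_smul]

theorem trDual_surjective : Function.Surjective (trDual (H := H)) := by
  have : FiniteDimensional ℂ (H →L[ℂ] H) := inferInstance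
  refine (LinearMap.injective_iff_surjective_of_finrank_eq_finrank
    (Subspace.dual_finrank_eq).symm).1 ?_
  rw [injective_iff_map_eq_zero]
  intro Y hY
  exact Tr_star_mul_self_eq_zero (by simpa [trDual, trL] using congrArg (fun f => f (star Y)) hY)

/-- Separation of a point from a subspace by the trace pairing. -/
theorem exists_trace_sep (N : Submodule ℂ (H →L[ℂ] H)) {X : H →L[ℂ] H} (hX : X ∉ N) :
    ∃ Y : H →L[ℂ] H, (∀ Z ∈ N, Tr (Y * Z) = 0) ∧ Tr (Y * X) ≠ 0 := by
  obtain ⟨f, hf, hfN⟩ := Submodule.exists_le_ker_of_notMem hX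
  obtain ⟨Y, rfl⟩ := trDual_surjective f
  exact ⟨Y, fun Z hZ => hfN hZ, hf⟩

theorem matPos_holevo {R F : H →L[ℂ] H} (hR : R.IsPositive) (hF : F.IsPositive) {n : ℕ}
    {M : Fin n → Fin n → (H →L[ℂ] H)} (hM : MatPos M) :
    MatPos fun i j => Tr (F * M i j) • R := by
  obtain ⟨p, u, rfl⟩ := ContinuousLinearMap.isPositive_iff_eq_sum_rankOne.1 hF
  obtain ⟨q, v, rfl⟩ := ContinuousLinearMap.isPositive_iff_eq_sum_rankOne.1 hR
  intro x
  have hrank : ∀ (w : H) (T : H →L[ℂ] H),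
      Tr (InnerProductSpace.rankOne ℂ w w * T) = ⟪w, T w⟫ := by
    intro w T
    rw [Tr_mul_comm, Tr_eq_trace]
    have : (T * InnerProductSpace.rankOne ℂ w w) = InnerProductSpace.rankOne ℂ (T w) w := by
      ext y; simp
    rw [this]
    simp [InnerProductSpace.trace_rankOne]
  have key : (∑ i, ∑ j, ⟪x i, (Tr ((∑ a, InnerProductSpace.rankOne ℂ (u a) (u a)) * M i j) •
        (∑ b, InnerProductSpace.rankOne ℂ (v b) (v b))) (x j)⟫)
      = ∑ a, ∑ b, ∑ i, ∑ j, ⟪⟪v b, x i⟫ • u a, M i j (⟪v b, x j⟫ • u a)⟫ := by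
    have h1 : ∀ i j, ⟪x i, (Tr ((∑ a, InnerProductSpace.rankOne ℂ (u a) (u a)) * M i j) •
        (∑ b, InnerProductSpace.rankOne ℂ (v b) (v b))) (x j)⟫
        = ∑ a, ∑ b, ⟪⟪v b, x i⟫ • u a, M i j (⟪v b, x j⟫ • u a)⟫ := by
      intro i j
      rw [Finset.sum_mul, Tr_sum]
      simp only [hrank, ContinuousLinearMap.smul_apply, ContinuousLinearMap.sum_apply,
        inner_smul_right, inner_sum, InnerProductSpace.rankOne_apply, map_smul, inner_smul_left,
        inner_conj_symm]
      rw [Finset.sum_mul_sum]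
      refine Finset.sum_congr rfl fun a _ => Finset.sum_congr rfl fun b _ => ?_
      ring
    simp only [h1]
    calc _ = ∑ i, ∑ a, ∑ j, ∑ b, ⟪⟪v b, x i⟫ • u a, M i j (⟪v b, x j⟫ • u a)⟫ :=
          Finset.sum_congr rfl fun i _ => Finset.sum_comm
      _ = ∑ a, ∑ i, ∑ j, ∑ b, ⟪⟪v b, x i⟫ • u a, M i j (⟪v b, x j⟫ • u a)⟫ := Finset.sum_comm
      _ = ∑ a, ∑ i, ∑ b, ∑ j, ⟪⟪v b, x i⟫ • u a, M i j (⟪v b, x j⟫ • u a)⟫ :=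
          Finset.sum_congr rfl fun a _ => Finset.sum_congr rfl fun i _ => Finset.sum_comm
      _ = _ := Finset.sum_congr rfl fun a _ => Finset.sum_comm
  rw [key]
  constructor
  · rw [Complex.re_sum]
    refine Finset.sum_nonneg fun a _ => ?_
    rw [Complex.re_sum]
    exact Finset.sum_nonneg fun b _ => (hM fun i => ⟪v b, x i⟫ • u a).1
  · rw [Complex.im_sum]
    refine Finset.sum_eq_zero fun a _ => ?_
    rw [Complex.im_sum]
    exact Finset.sum_eq_zero fun b _ => (hM fun i => ⟪v b, x i⟫ • u a).2

theorem matPos_sum {ι : Type*} (s : Finset ι) {n : ℕ}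
    {M : ι → Fin n → Fin n → (H →L[ℂ] H)} (hM : ∀ k, MatPos (M k)) :
    MatPos fun i j => ∑ k ∈ s, M k i j := by
  intro x
  have key : (∑ i, ∑ j, ⟪x i, (∑ k ∈ s, M k i j) (x j)⟫)
      = ∑ k ∈ s, ∑ i, ∑ j, ⟪x i, M k i j (x j)⟫ := by
    simp only [ContinuousLinearMap.sum_apply, inner_sum]
    calc _ = ∑ i, ∑ k ∈ s, ∑ j, ⟪x i, M k i j (x j)⟫ :=
          Finset.sum_congr rfl fun i _ => Finset.sum_comm
      _ = _ := Finset.sum_comm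
  rw [key]
  constructor
  · rw [Complex.re_sum]
    exact Finset.sum_nonneg fun k _ => (hM k x).1
  · rw [Complex.im_sum]
    exact Finset.sum_eq_zero fun k _ => (hM k x).2

/-- The measure-and-prepare map. -/
def holevo {m : ℕ} (R F : Fin m → (H →L[ℂ] H)) : (H →L[ℂ] H) →ₗ[ℂ] (H →L[ℂ] H) :=
  ∑ k, (trL (F k)).smulRight (R k)

theorem holevo_apply {m : ℕ} (R F : Fin m → (H →L[ℂ] H)) (X : H →L[ℂ] H) :
    holevo R F X = ∑ k, Tr (F k * X) • R k := by
  simp [holevo, trL]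

theorem holevo_isChannel {m : ℕ} (R F : Fin m → (H →L[ℂ] H)) (hR : ∀ k, IsState (R k))
    (hF : ∀ k, (F k).IsPositive) (hsum : ∑ k, F k = 1) : IsChannel (holevo R F) where
  maps_traceClass X _ := isTraceClass_of_finite _
  completelyPositive n M _ hM := by
    simp only [holevo_apply]
    exact matPos_sum _ fun k => matPos_holevo (hR k).2.1 (hF k) hM
  tracePreserving X _ := by
    rw [holevo_apply, Tr_sum]
    simp only [Tr_smul, (hR _).2.2, mul_one]
    rw [← Tr_sum, ← Finset.sum_mul, hsum, one_mul]

theorem isPositive_one_add {G : H →L[ℂ] H} (hG : IsSelfAdjoint G) (hn : ‖G‖ ≤ 1) :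
    (1 + G).IsPositive := by
  rw [ContinuousLinearMap.isPositive_def']
  refine ⟨(IsSelfAdjoint.one _).add hG, fun x => ?_⟩
  rw [ContinuousLinearMap.reApplyInnerSelf_apply, ContinuousLinearMap.add_apply, inner_add_left,
    map_add, ContinuousLinearMap.one_apply, inner_self_eq_norm_sq]
  have h1 : |RCLike.re ⟪G x, x⟫| ≤ ‖x‖ ^ 2 := by
    calc |RCLike.re ⟪G x, x⟫| ≤ ‖⟪G x, x⟫‖ := RCLike.abs_re_le_norm _
      _ ≤ ‖G x‖ * ‖x‖ := norm_inner_le_norm _ _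
      _ ≤ (1 * ‖x‖) * ‖x‖ := by gcongr; exact G.le_of_opNorm_le hn x
      _ = ‖x‖ ^ 2 := by ring
  linarith [neg_abs_le (RCLike.re ⟪G x, x⟫)]

/-- A family of self-adjoint trace-zero contractions detecting membership in `N`. -/
theorem exists_detecting_family (N : Submodule ℂ (H →L[ℂ] H))
    (hN_sa : ∀ X ∈ N, ContinuousLinearMap.adjoint X ∈ N)
    (hN_tr0 : ∀ X ∈ N, Tr X = 0) (hd : (Module.finrank ℂ H : ℂ) ≠ 0) :
    ∃ (n : ℕ) (G : Option (Fin n ⊕ Fin n) → (H →L[ℂ] H)),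
      (∀ j, IsSelfAdjoint (G j)) ∧ (∀ j, ‖G j‖ ≤ 1) ∧ (∀ j, Tr (G j) = 0) ∧
      ∀ X, (Tr X = 0 ∧ ∀ j, Tr (G j * X) = 0) ↔ X ∈ N := by
  -- the trace-zero part of the annihilator
  let V : Submodule ℂ (H →L[ℂ] H) :=
    { carrier := {Y | Tr Y = 0 ∧ ∀ X ∈ N, Tr (Y * X) = 0}
      add_mem' := by
        rintro a b ⟨ha, ha'⟩ ⟨hb, hb'⟩
        refine ⟨by rw [Tr_add, ha, hb, add_zero], fun X hX => ?_⟩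
        rw [add_mul, Tr_add, ha' X hX, hb' X hX, add_zero]
      zero_mem' := ⟨Tr_zero, fun X _ => by rw [zero_mul, Tr_zero]⟩
      smul_mem' := by
        rintro c a ⟨ha, ha'⟩
        refine ⟨by rw [Tr_smul, ha, mul_zero], fun X hX => ?_⟩
        rw [smul_mul_assoc, Tr_smul, ha' X hX, mul_zero] }
  have hVmem : ∀ Y, Y ∈ V ↔ Tr Y = 0 ∧ ∀ X ∈ N, Tr (Y * X) = 0 := fun Y => Iff.rfl
  have hVstar : ∀ Y ∈ V, star Y ∈ V := by
    intro Y hY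
    refine ⟨by rw [Tr_star, hY.1, star_zero], fun X hX => ?_⟩
    have h := hY.2 _ (hN_sa X hX)
    rw [← ContinuousLinearMap.star_eq_adjoint] at h
    rw [Tr_mul_comm]
    have h2 : X * star Y = star (Y * star X) := by simp
    rw [h2, Tr_star, h, star_zero]
  have hre : ∀ Y ∈ V, ((realPart Y : selfAdjoint (H →L[ℂ] H)) : H →L[ℂ] H) ∈ V := by
    intro Y hY
    rw [realPart_apply_coe, ← Complex.coe_smul]
    exact V.smul_mem _ (V.add_mem hY (hVstar Y hY))
  have him : ∀ Y ∈ V, ((imaginaryPart Y : selfAdjoint (H →L[ℂ] H)) : H →L[ℂ] H) ∈ V := by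
    intro Y hY
    rw [imaginaryPart_apply_coe, ← Complex.coe_smul]
    exact V.smul_mem _ (V.smul_mem _ (V.sub_mem hY (hVstar Y hY)))
  let b := Module.finBasis ℂ V
  let S : Option (Fin (Module.finrank ℂ V) ⊕ Fin (Module.finrank ℂ V)) → selfAdjoint (H →L[ℂ] H) :=
    fun j => match j with
      | none => 0
      | some (Sum.inl i) => realPart ((b i : V) : H →L[ℂ] H)
      | some (Sum.inr i) => imaginaryPart ((b i : V) : H →L[ℂ] H)
  have hSV : ∀ j, ((S j : selfAdjoint (H →L[ℂ] H)) : H →L[ℂ] H) ∈ V := by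
    rintro (_ | i | i)
    · exact V.zero_mem
    · exact hre _ (b i).2
    · exact him _ (b i).2
  let c : Option (Fin (Module.finrank ℂ V) ⊕ Fin (Module.finrank ℂ V)) → ℝ :=
    fun j => (‖(S j : H →L[ℂ] H)‖ + 1)⁻¹
  have hc : ∀ j, 0 < c j := fun j => by positivity
  have hGV : ∀ j, ((c j : ℝ) : ℂ) • (S j : H →L[ℂ] H) ∈ V := fun j => V.smul_mem _ (hSV j)
  refine ⟨Module.finrank ℂ V, fun j => ((c j : ℝ) : ℂ) • (S j : H →L[ℂ] H), fun j => ?_,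
    fun j => ?_, fun j => (hGV j).1, fun X => ⟨?_, fun hX => ⟨hN_tr0 X hX, fun j => (hGV j).2 X hX⟩⟩⟩
  · change IsSelfAdjoint (((c j : ℝ) : ℂ) • (S j : H →L[ℂ] H))
    rw [Complex.coe_smul]
    exact (IsSelfAdjoint.all (c j)).smul (S j).2
  · rw [norm_smul, Complex.norm_real, Real.norm_of_nonneg (hc j).le]
    change (‖(S j : H →L[ℂ] H)‖ + 1)⁻¹ * _ ≤ 1
    rw [inv_mul_le_iff₀ (by positivity)]
    linarith
  · rintro ⟨hX0, hXj⟩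
    by_contra hXN
    obtain ⟨Y, hYN, hYX⟩ := exists_trace_sep N hXN
    have hS0 : ∀ j, Tr ((S j : H →L[ℂ] H) * X) = 0 := by
      intro j
      have h := hXj j
      rw [smul_mul_assoc, Tr_smul] at h
      exact (mul_eq_zero.1 h).resolve_left (by exact_mod_cast (hc j).ne')
    have hb0 : ∀ i, Tr (((b i : V) : H →L[ℂ] H) * X) = 0 := by
      intro i
      rw [← realPart_add_I_smul_imaginaryPart ((b i : V) : H →L[ℂ] H), add_mul, Tr_add,
        smul_mul_assoc, Tr_smul]
      have h1 := hS0 (some (Sum.inl i))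
      have h2 := hS0 (some (Sum.inr i))
      simp only [S] at h1 h2
      rw [h1, h2]; simp
    have hV0 : ∀ W : V, Tr ((W : H →L[ℂ] H) * X) = 0 := by
      intro W
      rw [← b.sum_repr W]
      simp only [Submodule.coe_sum, Submodule.coe_smul, Finset.sum_mul, Tr_sum, smul_mul_assoc,
        Tr_smul, hb0, mul_zero, Finset.sum_const_zero]
    let t : ℂ := Tr Y / Module.finrank ℂ H
    have hW : Y - t • (1 : H →L[ℂ] H) ∈ V := by
      refine ⟨?_, fun Z hZ => ?_⟩
      · rw [Tr_sub, Tr_smul, Tr_one, div_mul_cancel₀ _ hd, sub_self]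
      · rw [sub_mul, Tr_sub, smul_mul_assoc, Tr_smul, one_mul, hYN Z hZ, hN_tr0 Z hZ]; simp
    have h := hV0 ⟨_, hW⟩
    simp only [sub_mul, Tr_sub, smul_mul_assoc, Tr_smul, one_mul, hX0, mul_zero, sub_zero] at h
    exact hYX h

end Helpers

/-- Every self-adjoint subspace of trace-zero operators on a
finite-dimensional complex Hilbert space is the null space of an entanglement
breaking channel `Φ(X) = ∑_{k=1}^m Tr(Fₖ X) Rₖ` (a finite measure-and-prepare form
with density matrices `Rₖ` and positive `Fₖ` summing to the identity). -/
theorem finiteDim_selfAdjoint_traceZero_subspace_is_null_space_of_EB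
    {H : Type*} [NormedAddCommGroup H] [InnerProductSpace ℂ H]
    [FiniteDimensional ℂ H]
    (N : Submodule ℂ (H →L[ℂ] H))
    (hN_sa : ∀ X ∈ N, ContinuousLinearMap.adjoint X ∈ N)
    (hN_tr0 : ∀ X ∈ N, Tr X = 0) :
    ∃ Φ : (H →L[ℂ] H) →ₗ[ℂ] (H →L[ℂ] H),
      IsChannel Φ ∧
      (∃ (m : ℕ) (R F : Fin m → (H →L[ℂ] H)),
        (∀ k, IsState (R k)) ∧ (∀ k, (F k).IsPositive) ∧
        (∑ k, F k) = 1 ∧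
        ∀ X : H →L[ℂ] H, Φ X = ∑ k, Tr (F k * X) • R k) ∧
      ∀ X : H →L[ℂ] H, (Φ X = 0 ↔ X ∈ N) := by
  -- it suffices to produce the data of a measure-and-prepare form over some finite index type
  suffices hmain : ∃ (m : ℕ) (R F : Fin m → (H →L[ℂ] H)),
      (∀ k, IsState (R k)) ∧ (∀ k, (F k).IsPositive) ∧ (∑ k, F k) = 1 ∧
      ∀ X : H →L[ℂ] H, (∑ k, Tr (F k * X) • R k = 0 ↔ X ∈ N) by
    obtain ⟨m, R, F, hR, hF, hsum, hker⟩ := hmain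
    exact ⟨holevo R F, holevo_isChannel R F hR hF hsum,
      ⟨m, R, F, hR, hF, hsum, holevo_apply R F⟩, fun X => by rw [holevo_apply]; exact hker X⟩
  rcases subsingleton_or_nontrivial H with hH | hH
  · refine ⟨0, fun _ => 0, fun _ => 0, fun k => k.elim0, fun k => k.elim0,
      Subsingleton.elim _ _, fun X => ?_⟩
    have hX : X = 0 := Subsingleton.elim _ _
    simp [hX]
  have hdpos : 0 < Module.finrank ℂ H := Module.finrank_pos
  have hd : (Module.finrank ℂ H : ℂ) ≠ 0 := by exact_mod_cast hdpos.ne'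
  obtain ⟨n, G, hGsa, hGn, hGtr, hG⟩ := exists_detecting_family N hN_sa hN_tr0 hd
  set d : ℕ := Module.finrank ℂ H with hddef
  let J := Option (Fin n ⊕ Fin n)
  let r : ℕ := Fintype.card J
  have hr : (r : ℂ) ≠ 0 := by
    have : r ≠ 0 := Fintype.card_ne_zero
    exact_mod_cast this
  -- signs
  let sg : Bool → ℂ := fun s => if s then 1 else -1
  let A : J × Bool → (H →L[ℂ] H) := fun p => 1 + sg p.2 • G p.1
  have hApos : ∀ p, (A p).IsPositive := by
    rintro ⟨j, s⟩
    cases s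
    · have := isPositive_one_add (hGsa j).neg (by rw [norm_neg]; exact hGn j)
      simpa [A, sg] using this
    · simpa [A, sg] using isPositive_one_add (hGsa j) (hGn j)
  have hAtr : ∀ p, Tr (A p) = d := by
    intro p
    simp only [A]
    rw [Tr_add, Tr_one, Tr_smul, hGtr, mul_zero, add_zero]
  let R : J × Bool → (H →L[ℂ] H) := fun p => (d : ℂ)⁻¹ • A p
  let F : J × Bool → (H →L[ℂ] H) := fun p => (2 * r : ℂ)⁻¹ • A p
  have hpos : ∀ (a : ℕ) (p : J × Bool), ((a : ℂ)⁻¹ • A p).IsPositive := by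
    intro a p
    refine (hApos p).smul_of_nonneg ?_
    rw [← Complex.ofReal_natCast, ← Complex.ofReal_inv]
    exact (RCLike.ofReal_nonneg (K := ℂ)).2 (inv_nonneg.2 (Nat.cast_nonneg a))
  have hRst : ∀ p, IsState (R p) := fun p =>
    ⟨isTraceClass_of_finite _, hpos d p, by
      simp only [R]; rw [Tr_smul, hAtr, inv_mul_cancel₀ hd]⟩
  have hFpos : ∀ p, (F p).IsPositive := fun p => by
    simpa [F] using hpos (2 * r) p
  have hFsum : ∑ p, F p = 1 := by
    simp only [F, A, ← Finset.smul_sum, Fintype.sum_prod_type, Fintype.sum_bool]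
    have h1 : ∀ j : J, (1 + sg true • G j) +
        (1 + sg false • G j) = (2 : ℂ) • (1 : H →L[ℂ] H) := by
      intro j
      simp only [sg, if_true, Bool.false_eq_true, if_false]
      module
    rw [Finset.sum_congr rfl fun j _ => h1 j, Finset.sum_const, Finset.card_univ,
      ← Nat.cast_smul_eq_nsmul ℂ, smul_smul, smul_smul]
    rw [show (2 * (r : ℂ))⁻¹ * (Fintype.card J : ℂ) * 2 = 1 by
      change (2 * (r : ℂ))⁻¹ * (r : ℂ) * 2 = 1
      field_simp, one_smul]
  have hΦ : ∀ X, ∑ p, Tr (F p * X) • R p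
      = (d : ℂ)⁻¹ • (Tr X • (1 : H →L[ℂ] H) + (r : ℂ)⁻¹ • ∑ j, Tr (G j * X) • G j) := by
    intro X
    rw [Fintype.sum_prod_type]
    have h1 : ∀ j : J, ∑ s, Tr (F (j, s) * X) • R (j, s) =
        ((d : ℂ)⁻¹ * (r : ℂ)⁻¹) • (Tr X • (1 : H →L[ℂ] H) + Tr (G j * X) • G j) := by
      intro j
      simp only [Fintype.sum_bool, F, R, A, sg, if_true, Bool.false_eq_true, if_false,
        smul_mul_assoc, add_mul, one_mul, Tr_smul, Tr_add, mul_inv]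
      module
    rw [Finset.sum_congr rfl fun j _ => h1 j, ← Finset.smul_sum, Finset.sum_add_distrib,
      Finset.sum_const, Finset.card_univ, ← Nat.cast_smul_eq_nsmul ℂ, ← smul_smul, smul_add,
      smul_smul]
    rw [show (r : ℂ)⁻¹ * (Fintype.card J : ℂ) = 1 from inv_mul_cancel₀ hr, one_smul]
  have hker : ∀ X, (∑ p, Tr (F p * X) • R p = 0 ↔ X ∈ N) := by
    intro X
    rw [hΦ, ← hG X, smul_eq_zero_iff_right (inv_ne_zero hd)]
    constructor
    · intro h
      have hX0 : Tr X = 0 := by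
        have h2 := congrArg Tr h
        rw [Tr_zero, Tr_add, Tr_smul, Tr_smul, Tr_sum, Tr_one] at h2
        simp only [Tr_smul, hGtr, mul_zero, Finset.sum_const_zero, add_zero] at h2
        exact (mul_eq_zero.1 h2).resolve_right hd
      refine ⟨hX0, ?_⟩
      rw [hX0, zero_smul, zero_add, smul_eq_zero_iff_right (inv_ne_zero hr)] at h
      have h3 := congrArg (fun T => Tr (T * star X)) h
      simp only [Finset.sum_mul, Tr_sum, smul_mul_assoc, Tr_smul, zero_mul, Tr_zero] at h3
      have h4 : ∀ j, Tr (G j * X) * Tr (G j * star X) = ((‖Tr (G j * X)‖ ^ 2 : ℝ) : ℂ) := by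
        intro j
        have h5 : G j * star X = star (X * G j) := by
          rw [star_mul, (hGsa j).star_eq]
        rw [h5, Tr_star, Tr_mul_comm X, Complex.star_def, Complex.mul_conj,
          Complex.normSq_eq_norm_sq]
      simp only [h4] at h3
      rw [← Complex.ofReal_sum, Complex.ofReal_eq_zero,
        Finset.sum_eq_zero_iff_of_nonneg (fun _ _ => by positivity)] at h3
      intro j
      simpa using h3 j (Finset.mem_univ j)
    · rintro ⟨h0, hj⟩
      simp [h0, hj]
  -- transfer to `Fin m`
  let e := (Fintype.equivFin (J × Bool)).symm
  refine ⟨Fintype.card (J × Bool), R ∘ e, F ∘ e, fun k => hRst _, fun k => hFpos _, ?_,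
    fun X => ?_⟩
  · rw [← hFsum]
    exact Equiv.sum_comp e F
  · rw [← hker X, ← Equiv.sum_comp e (fun p => Tr (F p * X) • R p)]
    rfl

end
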